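/- arXiv:2209.11733 — 2 statements merged into one kernel-verified Lean document; each statement's English description precedes it below -/
import Mathlib

section
/- Let λ > 0 and let (a_n) be a sequence of positive reals with a_n/n → λ. For every fixed positive integer k, the pushforward of the normalized Lebesgue (uniform probability) measure on the simplex Σ_n(a_n) = {y ∈ ℝ^n : y_1, …, y_n ≥ 0, y_1 + … + y_n ≤ a_n} under the projection y ↦ (y_1, …, y_k) converges weakly, as n → ∞, to the k-fold product of the exponential distribution with mean λ (density λ⁻¹ e^{−t/λ} on [0, ∞)). -/
open MeasureTheory Filter Topology

/-- The exponential distribution with mean `lam`: density `lam⁻¹ * exp (-t/lam)` for `t ≥ 0`. -/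
noncomputable def expMeasure (lam : ℝ) : Measure ℝ :=
  volume.withDensity fun t => ENNReal.ofReal (if 0 ≤ t then lam⁻¹ * Real.exp (-t / lam) else 0)

/-- The normalized Lebesgue measure on the simplex
`Σ_n(a) = {y ∈ ℝ^n : y_i ≥ 0, ∑ y_i ≤ a}`. -/
noncomputable def simplexMeasure (n : ℕ) (a : ℝ) : Measure (Fin n → ℝ) :=
  (volume {y : Fin n → ℝ | (∀ i, 0 ≤ y i) ∧ ∑ i, y i ≤ a})⁻¹ •
    volume.restrict {y : Fin n → ℝ | (∀ i, 0 ≤ y i) ∧ ∑ i, y i ≤ a}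

/-!
Projecting the uniform law of `Σ_n(a)` onto `k` coordinates leaves at `x` the volume of the slice
`Σ_{n-k}(a - ∑ xᵢ)` as density. Since `Σ_m(b)` has volume `b ^ m / m!`, this density is
`n (n - 1) ⋯ (n - k + 1) / a ^ k * (1 - ∑ xᵢ / a) ^ (n - k)`, which for `a / n → λ` tends pointwise
to `λ ^ (-k) * exp (-∑ xᵢ / λ)`, the density of the product of exponential laws. Pointwise
convergence of probability densities is convergence in total variation (Scheffé).
-/

open ProbabilityTheory (exponentialPDFReal)
open scoped ENNReal ProbabilityTheory

section Scheffe

variable {α : Type*} [MeasurableSpace α] {μ : Measure α}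

lemma tendsto_lintegral_tsub_of_tendsto {β : Type*} {l : Filter β} [l.IsCountablyGenerated]
    {p : β → α → ℝ≥0∞} {q : α → ℝ≥0∞} (hp : ∀ n, Measurable (p n)) (hq : Measurable q)
    (hq_fin : ∫⁻ x, q x ∂μ ≠ ∞) (hpq : ∀ᵐ x ∂μ, Tendsto (fun n => p n x) l (𝓝 (q x))) :
    Tendsto (fun n => ∫⁻ x, q x - p n x ∂μ) l (𝓝 0) := by
  have hlim : ∀ᵐ x ∂μ, Tendsto (fun n => q x - p n x) l (𝓝 0) := by
    filter_upwards [hpq, ae_lt_top hq hq_fin] with x hx hqx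
    simpa only [tsub_self] using ENNReal.Tendsto.sub tendsto_const_nhds hx (.inl hqx.ne)
  simpa only [Pi.sub_apply, lintegral_zero] using
    tendsto_lintegral_filter_of_dominated_convergence q (.of_forall fun n => hq.sub (hp n))
      (.of_forall fun n => .of_forall fun x => tsub_le_self) hq_fin hlim

lemma withDensity_eq_withDensity_inf_add_tsub {p q : α → ℝ≥0∞} (hp : Measurable p)
    (hq : Measurable q) :
    μ.withDensity p = μ.withDensity (p ⊓ q) + μ.withDensity (p - q) := by
  rw [← withDensity_add_left (hp.inf hq)]
  congr 1
  ext x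
  exact (add_comm _ _ |>.trans tsub_add_min).symm

lemma lintegral_tsub_comm {p q : α → ℝ≥0∞} (hp : Measurable p) (hq : Measurable q)
    (hpq : ∫⁻ x, p x ∂μ = ∫⁻ x, q x ∂μ) (hq_fin : ∫⁻ x, q x ∂μ ≠ ∞) :
    ∫⁻ x, p x - q x ∂μ = ∫⁻ x, q x - p x ∂μ := by
  refine (ENNReal.add_left_inj hq_fin).1 ?_
  calc ∫⁻ x, p x - q x ∂μ + ∫⁻ x, q x ∂μ
      = ∫⁻ x, max (p x) (q x) ∂μ := by
        simp_rw [← lintegral_add_right _ hq, tsub_add_eq_max]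
    _ = ∫⁻ x, q x - p x ∂μ + ∫⁻ x, p x ∂μ := by
        simp_rw [← lintegral_add_right _ hp, tsub_add_eq_max, max_comm]
    _ = ∫⁻ x, q x - p x ∂μ + ∫⁻ x, q x ∂μ := by rw [hpq]

variable {E : Type*} [NormedAddCommGroup E] [NormedSpace ℝ E]

lemma integral_withDensity_sub_integral_withDensity {p q : α → ℝ≥0∞} (hp : Measurable p)
    (hq : Measurable q) {f : α → E} (hfp : Integrable f (μ.withDensity p))
    (hfq : Integrable f (μ.withDensity q)) :
    ∫ x, f x ∂μ.withDensity p - ∫ x, f x ∂μ.withDensity q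
      = ∫ x, f x ∂μ.withDensity (p - q) - ∫ x, f x ∂μ.withDensity (q - p) := by
  rw [withDensity_eq_withDensity_inf_add_tsub hp hq] at hfp ⊢
  rw [withDensity_eq_withDensity_inf_add_tsub hq hp, inf_comm q p] at hfq ⊢
  rw [integral_add_measure hfp.left_of_add_measure hfp.right_of_add_measure,
    integral_add_measure hfq.left_of_add_measure hfq.right_of_add_measure,
    add_sub_add_left_eq_sub]

lemma norm_integral_withDensity_le (p : α → ℝ≥0∞) {f : α → E} {C : ℝ} (hC : ∀ x, ‖f x‖ ≤ C)
    (hp_fin : ∫⁻ x, p x ∂μ ≠ ∞) :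
    ‖∫ x, f x ∂μ.withDensity p‖ ≤ C * (∫⁻ x, p x ∂μ).toReal := by
  have := isFiniteMeasure_withDensity hp_fin
  simpa [measureReal_def] using
    norm_integral_le_of_norm_le_const (μ := μ.withDensity p) (.of_forall hC)

lemma norm_integral_withDensity_sub_le {p q : α → ℝ≥0∞} (hp : Measurable p) (hq : Measurable q)
    (hpq : ∫⁻ x, p x ∂μ = ∫⁻ x, q x ∂μ) (hq_fin : ∫⁻ x, q x ∂μ ≠ ∞)
    {f : α → E} (hf : AEStronglyMeasurable f μ) {C : ℝ} (hC : ∀ x, ‖f x‖ ≤ C) :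
    ‖∫ x, f x ∂μ.withDensity p - ∫ x, f x ∂μ.withDensity q‖
      ≤ 2 * C * (∫⁻ x, q x - p x ∂μ).toReal := by
  have hint {r : α → ℝ≥0∞} (hr : ∫⁻ x, r x ∂μ ≠ ∞) : Integrable f (μ.withDensity r) :=
    have := isFiniteMeasure_withDensity hr
    .of_bound (hf.mono_ac (withDensity_absolutelyContinuous μ r)) C (.of_forall hC)
  have hswap : ∫⁻ x, (p - q) x ∂μ = ∫⁻ x, (q - p) x ∂μ := lintegral_tsub_comm hp hq hpq hq_fin
  have hfin : ∫⁻ x, (q - p) x ∂μ ≠ ∞ :=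
    ne_top_of_le_ne_top hq_fin (lintegral_mono fun x => tsub_le_self)
  calc ‖∫ x, f x ∂μ.withDensity p - ∫ x, f x ∂μ.withDensity q‖
      = ‖∫ x, f x ∂μ.withDensity (p - q) - ∫ x, f x ∂μ.withDensity (q - p)‖ := by
        rw [integral_withDensity_sub_integral_withDensity hp hq (hint (hpq.trans_ne hq_fin))
          (hint hq_fin)]
    _ ≤ C * (∫⁻ x, (p - q) x ∂μ).toReal + C * (∫⁻ x, (q - p) x ∂μ).toReal :=
        (norm_sub_le _ _).trans (add_le_add
          (norm_integral_withDensity_le _ hC (hswap.trans_ne hfin))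
          (norm_integral_withDensity_le _ hC hfin))
    _ = 2 * C * (∫⁻ x, q x - p x ∂μ).toReal := by
        rw [hswap]
        simp only [Pi.sub_apply]
        ring

theorem tendsto_integral_withDensity_of_tendsto {β : Type*} {l : Filter β}
    [l.IsCountablyGenerated] {p : β → α → ℝ≥0∞} {q : α → ℝ≥0∞} (hp : ∀ n, Measurable (p n))
    (hq : Measurable q) (hq_fin : ∫⁻ x, q x ∂μ ≠ ∞)
    (hmass : ∀ᶠ n in l, ∫⁻ x, p n x ∂μ = ∫⁻ x, q x ∂μ)
    (hpq : ∀ᵐ x ∂μ, Tendsto (fun n => p n x) l (𝓝 (q x)))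
    {f : α → E} (hf : AEStronglyMeasurable f μ) {C : ℝ} (hC : ∀ x, ‖f x‖ ≤ C) :
    Tendsto (fun n => ∫ x, f x ∂μ.withDensity (p n)) l (𝓝 (∫ x, f x ∂μ.withDensity q)) := by
  have hdist : Tendsto (fun n => 2 * C * (∫⁻ x, q x - p n x ∂μ).toReal) l (𝓝 0) := by
    simpa only [Function.comp_def, ENNReal.toReal_zero, mul_zero] using
      ((ENNReal.tendsto_toReal ENNReal.zero_ne_top).comp
        (tendsto_lintegral_tsub_of_tendsto hp hq hq_fin hpq)).const_mul (2 * C)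
  rw [tendsto_iff_norm_sub_tendsto_zero]
  refine squeeze_zero' (.of_forall fun n => norm_nonneg _) ?_ hdist
  filter_upwards [hmass] with n hn
  exact norm_integral_withDensity_sub_le (hp n) hq hn hq_fin hf hC

end Scheffe

section SolidSimplex

/-- The simplex `{y ∈ ℝ^ι : y_i ≥ 0, ∑ y_i ≤ a}`. An arbitrary finite index type makes it
possible to split the coordinates into two groups. -/
def solidSimplex (ι : Type*) [Fintype ι] (a : ℝ) : Set (ι → ℝ) :=
  {y | (∀ i, 0 ≤ y i) ∧ ∑ i, y i ≤ a}

variable {ι κ τ : Type*} [Fintype ι] [Fintype κ] [Fintype τ]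

lemma measurableSet_solidSimplex (a : ℝ) : MeasurableSet (solidSimplex ι a) := by
  unfold solidSimplex
  measurability

lemma mem_solidSimplex_iff_of_sum_equiv (e : ι ⊕ κ ≃ τ) {a : ℝ} {y : τ → ℝ} :
    y ∈ solidSimplex τ a ↔ (fun i => y (e (.inl i))) ∈ solidSimplex ι a ∧
      (fun j => y (e (.inr j))) ∈ solidSimplex κ (a - ∑ i, y (e (.inl i))) := by
  simp only [solidSimplex, Set.mem_ofPred_eq, ← e.forall_congr_right, ← e.sum_comp, Sum.forall,
    Fintype.sum_sum_type, le_sub_iff_add_le']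
  constructor
  · rintro ⟨⟨hl, hr⟩, hsum⟩
    exact ⟨⟨hl, (le_add_of_nonneg_right (Finset.sum_nonneg fun j _ => hr j)).trans hsum⟩, hr, hsum⟩
  · rintro ⟨⟨hl, -⟩, hr, hsum⟩
    exact ⟨⟨hl, hr⟩, hsum⟩

lemma exists_measurePreserving_prod_pi (e : ι ⊕ κ ≃ τ) :
    ∃ φ : (ι → ℝ) × (κ → ℝ) ≃ᵐ (τ → ℝ), MeasurePreserving φ ∧
      (∀ z i, φ z (e (.inl i)) = z.1 i) ∧ ∀ z j, φ z (e (.inr j)) = z.2 j :=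
  ⟨(MeasurableEquiv.sumPiEquivProdPi fun _ => ℝ).symm.trans
      (MeasurableEquiv.piCongrLeft (fun _ => ℝ) e),
    (volume_measurePreserving_piCongrLeft (fun _ => ℝ) e).comp
      (volume_measurePreserving_sumPiEquivProdPi_symm _),
    fun z i => Equiv.piCongrLeft_sumInl (fun _ => ℝ) e z.1 z.2 i,
    fun z j => Equiv.piCongrLeft_sumInr (fun _ => ℝ) e z.1 z.2 j⟩

lemma volume_solidSimplex_inter_preimage (e : ι ⊕ κ ≃ τ) (a : ℝ) {s : Set (ι → ℝ)}
    (hs : MeasurableSet s) :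
    volume (solidSimplex τ a ∩ (fun y i => y (e (.inl i))) ⁻¹' s)
      = ∫⁻ x in s ∩ solidSimplex ι a, volume (solidSimplex κ (a - ∑ i, x i)) := by
  obtain ⟨φ, hφ, hφl, hφr⟩ := exists_measurePreserving_prod_pi e
  have hmeas : MeasurableSet (solidSimplex τ a ∩ (fun y i => y (e (.inl i))) ⁻¹' s) :=
    (measurableSet_solidSimplex a).inter (measurableSet_preimage (by fun_prop) hs)
  have hslice (x : ι → ℝ) :
      volume (Prod.mk x ⁻¹' (φ ⁻¹' (solidSimplex τ a ∩ (fun y i => y (e (.inl i))) ⁻¹' s)))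
        = (s ∩ solidSimplex ι a).indicator
            (fun x => volume (solidSimplex κ (a - ∑ i, x i))) x := by
    have hpre : Prod.mk x ⁻¹' (φ ⁻¹' (solidSimplex τ a ∩ (fun y i => y (e (.inl i))) ⁻¹' s))
        = {y | x ∈ s ∩ solidSimplex ι a ∧ y ∈ solidSimplex κ (a - ∑ i, x i)} := by
      ext y
      simp only [Set.mem_preimage, Set.mem_inter_iff, mem_solidSimplex_iff_of_sum_equiv e, hφl,
        hφr, Set.mem_ofPred_eq]
      tauto
    rw [hpre]
    by_cases hx : x ∈ s ∩ solidSimplex ι a <;> simp [hx]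
  rw [← hφ.measure_preimage hmeas.nullMeasurableSet, Measure.volume_eq_prod,
    Measure.prod_apply (φ.measurable hmeas), lintegral_congr hslice,
    lintegral_indicator (hs.inter (measurableSet_solidSimplex a))]

lemma setLIntegral_Icc_ofReal_sub_pow_div_factorial (n : ℕ) {a : ℝ} (ha : 0 ≤ a) :
    ∫⁻ t in Set.Icc 0 a, ENNReal.ofReal ((a - t) ^ n / n.factorial)
      = ENNReal.ofReal (a ^ (n + 1) / (n + 1).factorial) := by
  rw [← ofReal_integral_eq_lintegral_ofReal (Continuous.integrableOn_Icc (by fun_prop)),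
    integral_Icc_eq_integral_Ioc, ← intervalIntegral.integral_of_le ha,
    intervalIntegral.integral_comp_sub_left (fun x => x ^ n / (n.factorial : ℝ)) a,
    intervalIntegral.integral_div, integral_pow, Nat.factorial_succ]
  · push_cast
    congr 1
    field_simp
    simp
  · filter_upwards [ae_restrict_mem measurableSet_Icc] with t ht
    have := sub_nonneg.2 ht.2
    positivity

lemma setLIntegral_solidSimplex_unique [Unique ι] (a : ℝ) (g : ℝ → ℝ≥0∞) :
    ∫⁻ x in solidSimplex ι a, g (∑ i, x i) = ∫⁻ t in Set.Icc 0 a, g t := by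
  obtain rfl : ‹Fintype ι› = Unique.fintype := Subsingleton.elim _ _
  have hpre : MeasurableEquiv.funUnique ι ℝ ⁻¹' Set.Icc 0 a = solidSimplex ι a := by
    ext x
    simp [solidSimplex, Unique.forall_iff]
  rw [← (volume_preserving_funUnique ι ℝ).setLIntegral_comp_preimage_emb
    (MeasurableEquiv.measurableEmbedding _), hpre]
  simp

theorem volume_solidSimplex {a : ℝ} (ha : 0 ≤ a) :
    volume (solidSimplex ι a)
      = ENNReal.ofReal (a ^ Fintype.card ι / (Fintype.card ι).factorial) := by
  induction hn : Fintype.card ι generalizing ι a with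
  | zero =>
    have := Fintype.card_eq_zero_iff.1 hn
    have huniv : solidSimplex ι a = Set.univ := by
      ext y
      simp [solidSimplex, ha]
    simp [huniv, volume_pi]
  | succ n ih =>
    let e : PUnit.{1} ⊕ ULift (Fin n) ≃ ι := Fintype.equivOfCardEq (by simp [hn, add_comm])
    calc volume (solidSimplex ι a)
        = ∫⁻ x in solidSimplex PUnit.{1} a,
            volume (solidSimplex (ULift (Fin n)) (a - ∑ i, x i)) := by
          simpa using volume_solidSimplex_inter_preimage e a MeasurableSet.univ
      _ = ∫⁻ x in solidSimplex PUnit.{1} a, ENNReal.ofReal ((a - ∑ i, x i) ^ n / n.factorial) :=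
          setLIntegral_congr_fun (measurableSet_solidSimplex a) fun x hx =>
            ih (sub_nonneg.2 hx.2) (by simp)
      _ = ∫⁻ t in Set.Icc 0 a, ENNReal.ofReal ((a - t) ^ n / n.factorial) :=
          setLIntegral_solidSimplex_unique a
            fun t => ENNReal.ofReal ((a - t) ^ n / n.factorial)
      _ = ENNReal.ofReal (a ^ (n + 1) / (n + 1).factorial) :=
          setLIntegral_Icc_ofReal_sub_pow_div_factorial n ha

/-- The Lebesgue density at `x ∈ ℝ^ι` of the projection to `ℝ^ι` of the uniform law on the
`n`-dimensional simplex `{y : y_i ≥ 0, ∑ y_i ≤ a}`. It is meaningful for `card ι ≤ n`. -/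
noncomputable def simplexMarginalDensity (n : ℕ) (a : ℝ) (x : ι → ℝ) : ℝ :=
  (solidSimplex ι a).indicator (fun x => n.descFactorial (Fintype.card ι) / a ^ Fintype.card ι *
    (1 - (∑ i, x i) / a) ^ (n - Fintype.card ι)) x

lemma measurable_simplexMarginalDensity (n : ℕ) (a : ℝ) :
    Measurable (simplexMarginalDensity (ι := ι) n a) :=
  Measurable.indicator (by fun_prop) (measurableSet_solidSimplex a)

lemma simplexMarginalDensity_of_mem {n m : ℕ} (hn : n = Fintype.card ι + m) {a : ℝ} (ha : 0 < a)
    {x : ι → ℝ} (hx : x ∈ solidSimplex ι a) :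
    simplexMarginalDensity n a x
      = (a ^ n / n.factorial)⁻¹ * ((a - ∑ i, x i) ^ m / m.factorial) := by
  subst hn
  have hfact : ((Fintype.card ι + m).factorial : ℝ)
      = m.factorial * (Fintype.card ι + m).descFactorial (Fintype.card ι) := by
    rw [← Nat.factorial_mul_descFactorial (Nat.le_add_right _ m), Nat.add_sub_cancel_left,
      Nat.cast_mul]
  rw [simplexMarginalDensity, Set.indicator_of_mem hx, hfact, Nat.add_sub_cancel_left,
    one_sub_div ha.ne', div_pow]
  have := Nat.factorial_pos m
  field_simp
  ring

lemma ofReal_simplexMarginalDensity (hcard : Fintype.card τ = Fintype.card ι + Fintype.card κ)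
    {a : ℝ} (ha : 0 < a) (x : ι → ℝ) :
    ENNReal.ofReal (simplexMarginalDensity (Fintype.card τ) a x)
      = (solidSimplex ι a).indicator (fun x =>
          (volume (solidSimplex τ a))⁻¹ * volume (solidSimplex κ (a - ∑ i, x i))) x := by
  by_cases hx : x ∈ solidSimplex ι a
  · have hvol : 0 < a ^ Fintype.card τ / (Fintype.card τ).factorial := by positivity
    rw [Set.indicator_of_mem hx, simplexMarginalDensity_of_mem hcard ha hx,
      volume_solidSimplex ha.le, volume_solidSimplex (sub_nonneg.2 hx.2),
      ← ENNReal.ofReal_inv_of_pos hvol, ← ENNReal.ofReal_mul (inv_nonneg.2 hvol.le)]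
  · rw [simplexMarginalDensity, Set.indicator_of_notMem hx, Set.indicator_of_notMem hx,
      ENNReal.ofReal_zero]

lemma volume_solidSimplex_ne_zero {a : ℝ} (ha : 0 < a) : volume (solidSimplex ι a) ≠ 0 := by
  rw [volume_solidSimplex ha.le]
  exact (ENNReal.ofReal_pos.2 (by positivity)).ne'

lemma volume_solidSimplex_ne_top {a : ℝ} (ha : 0 < a) : volume (solidSimplex ι a) ≠ ∞ := by
  rw [volume_solidSimplex ha.le]
  exact ENNReal.ofReal_ne_top

lemma isProbabilityMeasure_cond_solidSimplex {a : ℝ} (ha : 0 < a) :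
    IsProbabilityMeasure (volume[|solidSimplex ι a]) :=
  ProbabilityTheory.cond_isProbabilityMeasure_of_finite (volume_solidSimplex_ne_zero ha)
    (volume_solidSimplex_ne_top ha)

theorem map_cond_solidSimplex {g : ι → τ} (hg : Function.Injective g) {a : ℝ} (ha : 0 < a) :
    (volume[|solidSimplex τ a]).map (fun y => y ∘ g)
      = volume.withDensity fun x : ι → ℝ =>
          ENNReal.ofReal (simplexMarginalDensity (Fintype.card τ) a x) := by
  classical
  let e : ι ⊕ ↥(Set.range g)ᶜ ≃ τ :=
    ((Equiv.ofInjective g hg).sumCongr (.refl _)).trans (Equiv.Set.sumCompl (Set.range g))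
  have he : (fun y : τ → ℝ => y ∘ g) = fun y i => y (e (.inl i)) := rfl
  have hcard : Fintype.card τ = Fintype.card ι + Fintype.card ↥(Set.range g)ᶜ := by
    rw [← Fintype.card_sum, Fintype.card_congr e]
  ext s hs
  rw [he, Measure.map_apply (by fun_prop) hs,
    ProbabilityTheory.cond_apply (measurableSet_solidSimplex a),
    volume_solidSimplex_inter_preimage e a hs,
    ← lintegral_const_mul' _ _ (ENNReal.inv_ne_top.2 (volume_solidSimplex_ne_zero ha)),
    withDensity_apply _ hs]
  simp_rw [ofReal_simplexMarginalDensity hcard ha]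
  rw [setLIntegral_indicator (measurableSet_solidSimplex a), Set.inter_comm]

theorem lintegral_simplexMarginalDensity_eq_one {n : ℕ} (hn : Fintype.card ι ≤ n) {a : ℝ}
    (ha : 0 < a) : ∫⁻ x : ι → ℝ, ENNReal.ofReal (simplexMarginalDensity n a x) = 1 := by
  obtain ⟨g⟩ : Nonempty (ι ↪ Fin n) := Function.Embedding.nonempty_of_card_le (by simpa)
  have hmass := congrArg (· Set.univ) (map_cond_solidSimplex g.injective ha)
  simp only [Fintype.card_fin, withDensity_apply _ MeasurableSet.univ, Measure.restrict_univ]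
    at hmass
  have := isProbabilityMeasure_cond_solidSimplex (ι := Fin n) ha
  rw [← hmass, Measure.map_apply (by fun_prop) MeasurableSet.univ, Set.preimage_univ, measure_univ]

end SolidSimplex

section Exponential

theorem pi_withDensity_ofReal {ι : Type*} [Fintype ι] {α : ι → Type*}
    [∀ i, MeasurableSpace (α i)] {μ : ∀ i, Measure (α i)} [∀ i, SigmaFinite (μ i)]
    {d : ∀ i, α i → ℝ} (hd : ∀ i, Integrable (d i) (μ i)) (hd_nonneg : ∀ i x, 0 ≤ d i x) :
    Measure.pi (fun i => (μ i).withDensity fun x => ENNReal.ofReal (d i x))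
      = (Measure.pi μ).withDensity fun x => ENNReal.ofReal (∏ i, d i (x i)) := by
  have : ∀ i, IsFiniteMeasure ((μ i).withDensity fun x => ENNReal.ofReal (d i x)) := fun i =>
    isFiniteMeasure_withDensity_ofReal (hd i).2
  refine Measure.pi_eq fun s hs => ?_
  rw [withDensity_apply _ (.univ_pi hs), Measure.restrict_pi_pi,
    ← ofReal_integral_eq_lintegral_ofReal, integral_fintype_prod_eq_prod,
    ENNReal.ofReal_prod_of_nonneg fun i _ => integral_nonneg (hd_nonneg i)]
  · refine Finset.prod_congr rfl fun i _ => ?_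
    rw [withDensity_apply _ (hs i), ofReal_integral_eq_lintegral_ofReal (hd i).integrableOn
      (.of_forall (hd_nonneg i))]
  · exact .fintype_prod_dep fun i => (hd i).integrableOn
  · exact .of_forall fun x => Finset.prod_nonneg fun i _ => hd_nonneg i _

lemma integrable_exponentialPDFReal {r : ℝ} (hr : 0 < r) :
    Integrable (exponentialPDFReal r) := by
  refine (lintegral_ofReal_ne_top_iff_integrable
    (ProbabilityTheory.measurable_exponentialPDFReal r).aestronglyMeasurable
    (.of_forall (ProbabilityTheory.exponentialPDFReal_nonneg hr))).1 ?_
  exact (ProbabilityTheory.lintegral_exponentialPDF_eq_one hr).trans_ne ENNReal.one_ne_top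

theorem pi_expMeasure {ι : Type*} [Fintype ι] {r : ℝ} (hr : 0 < r) :
    Measure.pi (fun _ : ι => ProbabilityTheory.expMeasure r)
      = volume.withDensity fun x =>
          ENNReal.ofReal (∏ i, exponentialPDFReal r (x i)) :=
  pi_withDensity_ofReal (fun _ => integrable_exponentialPDFReal hr)
    fun _ => ProbabilityTheory.exponentialPDFReal_nonneg hr

lemma lintegral_prod_exponentialPDFReal_eq_one {ι : Type*} [Fintype ι] {r : ℝ} (hr : 0 < r) :
    ∫⁻ x : ι → ℝ, ENNReal.ofReal (∏ i, exponentialPDFReal r (x i)) = 1 := by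
  have := ProbabilityTheory.isProbabilityMeasure_expMeasure hr
  rw [← setLIntegral_univ, ← withDensity_apply _ MeasurableSet.univ, ← pi_expMeasure hr,
    measure_univ]

lemma measurable_prod_exponentialPDFReal {ι : Type*} [Fintype ι] (r : ℝ) :
    Measurable fun x : ι → ℝ => ∏ i, exponentialPDFReal r (x i) :=
  Finset.measurable_prod _ fun i _ =>
    (ProbabilityTheory.measurable_exponentialPDFReal r).comp (measurable_pi_apply i)

lemma prod_exponentialPDFReal_of_nonneg {ι : Type*} [Fintype ι] (r : ℝ) {x : ι → ℝ}
    (hx : ∀ i, 0 ≤ x i) :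
    ∏ i, exponentialPDFReal r (x i)
      = r ^ Fintype.card ι * Real.exp (-(r * ∑ i, x i)) := by
  simp [exponentialPDFReal, ProbabilityTheory.gammaPDFReal, hx,
    Finset.prod_mul_distrib, ← Real.exp_sum, Finset.mul_sum]

lemma prod_exponentialPDFReal_of_neg {ι : Type*} [Fintype ι] (r : ℝ) {x : ι → ℝ} {i : ι}
    (hx : x i < 0) : ∏ i, exponentialPDFReal r (x i) = 0 :=
  Finset.prod_eq_zero (Finset.mem_univ i) (if_neg hx.not_ge)

lemma expMeasure_eq_expMeasure_inv (lam : ℝ) :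
    expMeasure lam = ProbabilityTheory.expMeasure lam⁻¹ := by
  refine congrArg volume.withDensity (funext fun t => ?_)
  rw [div_eq_inv_mul, mul_neg]
  exact (ProbabilityTheory.exponentialPDF_eq lam⁻¹ t).symm

end Exponential

section Limit

variable {lam : ℝ} {a : ℕ → ℝ}

lemma tendsto_atTop_of_tendsto_div_natCast (hlam : 0 < lam)
    (hlim : Tendsto (fun n => a n / n) atTop (𝓝 lam)) : Tendsto a atTop atTop := by
  refine (hlim.pos_mul_atTop hlam tendsto_natCast_atTop_atTop).congr' ?_
  filter_upwards [eventually_ne_atTop 0] with n hn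
  exact div_mul_cancel₀ _ (Nat.cast_ne_zero.2 hn)

lemma tendsto_natCast_div (hlam : 0 < lam) (hlim : Tendsto (fun n => a n / n) atTop (𝓝 lam)) :
    Tendsto (fun n : ℕ => n / a n) atTop (𝓝 lam⁻¹) :=
  (hlim.inv₀ hlam.ne').congr fun _ => inv_div _ _

lemma tendsto_descFactorial_div_pow (hlam : 0 < lam)
    (hlim : Tendsto (fun n => a n / n) atTop (𝓝 lam)) (k : ℕ) :
    Tendsto (fun n : ℕ => n.descFactorial k / a n ^ k) atTop (𝓝 (lam⁻¹ ^ k)) := by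
  have hdesc : Tendsto (fun n : ℕ => (n.descFactorial k : ℝ) / (n : ℝ) ^ k) atTop (𝓝 1) := by
    refine (Asymptotics.isEquivalent_iff_tendsto_one ?_).1 (isEquivalent_descFactorial k)
    filter_upwards [eventually_gt_atTop 0] with n hn
    positivity
  have hprod := hdesc.mul ((tendsto_natCast_div hlam hlim).pow k)
  rw [one_mul] at hprod
  refine hprod.congr' ?_
  filter_upwards [eventually_ne_atTop 0] with n hn
  rw [div_pow, div_mul_div_cancel₀ (pow_ne_zero k (Nat.cast_ne_zero.2 hn))]

lemma tendsto_one_sub_div_pow_sub (hlam : 0 < lam)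
    (hlim : Tendsto (fun n => a n / n) atTop (𝓝 lam)) (k : ℕ) (s : ℝ) :
    Tendsto (fun n => (1 - s / a n) ^ (n - k)) atTop (𝓝 (Real.exp (-(lam⁻¹ * s)))) := by
  have hexponent : Tendsto (fun n : ℕ => n * (-s / a n)) atTop (𝓝 (-(lam⁻¹ * s))) := by
    rw [neg_mul_eq_mul_neg]
    exact ((tendsto_natCast_div hlam hlim).mul_const (-s)).congr fun n => by ring
  have hfull : Tendsto (fun n => (1 - s / a n) ^ n) atTop (𝓝 (Real.exp (-(lam⁻¹ * s)))) :=
    (Real.tendsto_one_add_pow_exp_of_tendsto hexponent).congr fun n => by ring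
  have hbase : Tendsto (fun n => 1 - s / a n) atTop (𝓝 1) := by
    simpa only [sub_zero] using
      ((tendsto_atTop_of_tendsto_div_natCast hlam hlim).const_div_atTop s).const_sub 1
  have hquot := hfull.div (hbase.pow k) (by simp)
  rw [one_pow, div_one] at hquot
  refine hquot.congr' ?_
  filter_upwards [eventually_ge_atTop k, hbase.eventually_ne one_ne_zero] with n hn hne
  exact (pow_sub₀ _ hne hn).symm

theorem tendsto_simplexMarginalDensity {ι : Type*} [Fintype ι] (hlam : 0 < lam)
    (hlim : Tendsto (fun n => a n / n) atTop (𝓝 lam)) (x : ι → ℝ) :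
    Tendsto (fun n => simplexMarginalDensity n (a n) x) atTop
      (𝓝 (∏ i, exponentialPDFReal lam⁻¹ (x i))) := by
  by_cases hx : ∀ i, 0 ≤ x i
  · rw [prod_exponentialPDFReal_of_nonneg lam⁻¹ hx]
    refine ((tendsto_descFactorial_div_pow hlam hlim (Fintype.card ι)).mul
      (tendsto_one_sub_div_pow_sub hlam hlim (Fintype.card ι) (∑ i, x i))).congr' ?_
    filter_upwards [(tendsto_atTop_of_tendsto_div_natCast hlam hlim).eventually_ge_atTop (∑ i, x i)]
      with n hn
    rw [simplexMarginalDensity, Set.indicator_of_mem (show x ∈ solidSimplex ι (a n) from ⟨hx, hn⟩)]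
  · obtain ⟨i, hi⟩ := not_forall.1 hx
    rw [prod_exponentialPDFReal_of_neg lam⁻¹ (not_le.1 hi)]
    refine tendsto_const_nhds.congr fun n => ?_
    rw [simplexMarginalDensity, Set.indicator_of_notMem fun h => hx h.1]

end Limit

lemma simplexMeasure_eq_cond (n : ℕ) (a : ℝ) :
    simplexMeasure n a = volume[|solidSimplex (Fin n) a] := rfl

lemma map_simplexMeasure {k n : ℕ} (hkn : k ≤ n) {a : ℝ} (ha : 0 < a) :
    (simplexMeasure n a).map (fun y => y ∘ Fin.castLE hkn)
      = volume.withDensity fun x => ENNReal.ofReal (simplexMarginalDensity n a x) := by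
  simpa only [simplexMeasure_eq_cond, Fintype.card_fin] using
    map_cond_solidSimplex (Fin.castLE_injective hkn) ha

lemma integral_simplexMeasure_eq_integral_withDensity {E : Type*} [NormedAddCommGroup E]
    [NormedSpace ℝ E] {k n : ℕ} (hkn : k ≤ n) {a : ℝ} (ha : 0 < a) {f : (Fin k → ℝ) → E}
    (hf : AEStronglyMeasurable f) :
    ∫ y, f (fun i : Fin k => if h : (i : ℕ) < n then y ⟨i, h⟩ else 0) ∂simplexMeasure n a
      = ∫ x, f x ∂volume.withDensity fun x => ENNReal.ofReal (simplexMarginalDensity n a x) := by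
  have hproj (y : Fin n → ℝ) :
      (fun i : Fin k => if h : (i : ℕ) < n then y ⟨i, h⟩ else 0) = y ∘ Fin.castLE hkn :=
    funext fun i => dif_pos (i.2.trans_le hkn)
  have hf' : AEStronglyMeasurable f ((simplexMeasure n a).map fun y => y ∘ Fin.castLE hkn) := by
    rw [map_simplexMeasure hkn ha]
    exact hf.mono_ac (withDensity_absolutelyContinuous _ _)
  simp_rw [hproj, ← map_simplexMeasure hkn ha]
  exact (integral_map (Measurable.aemeasurable (by fun_prop)) hf').symm

theorem stmt0_general {E : Type*} [NormedAddCommGroup E] [NormedSpace ℝ E] {lam : ℝ}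
    (hlam : 0 < lam) {a : ℕ → ℝ} (hlim : Tendsto (fun n => a n / n) atTop (𝓝 lam)) {k : ℕ}
    {f : (Fin k → ℝ) → E} (hf : AEStronglyMeasurable f) {C : ℝ} (hC : ∀ x, ‖f x‖ ≤ C) :
    Tendsto
      (fun n => ∫ y, f (fun i : Fin k => if h : (i : ℕ) < n then y ⟨i, h⟩ else 0)
        ∂ simplexMeasure n (a n))
      atTop
      (𝓝 (∫ x, f x ∂ Measure.pi fun _ : Fin k => expMeasure lam)) := by
  have ha : ∀ᶠ n in atTop, 0 < a n :=
    (tendsto_atTop_of_tendsto_div_natCast hlam hlim).eventually_gt_atTop 0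
  have hmass : ∀ᶠ n in atTop, ∫⁻ x : Fin k → ℝ, ENNReal.ofReal (simplexMarginalDensity n (a n) x)
      = ∫⁻ x : Fin k → ℝ, ENNReal.ofReal (∏ i, exponentialPDFReal lam⁻¹ (x i)) := by
    filter_upwards [eventually_ge_atTop k, ha] with n hkn han
    rw [lintegral_simplexMarginalDensity_eq_one (by simpa using hkn) han,
      lintegral_prod_exponentialPDFReal_eq_one (inv_pos.2 hlam)]
  have hexp_fin : ∫⁻ x : Fin k → ℝ, ENNReal.ofReal (∏ i, exponentialPDFReal lam⁻¹ (x i)) ≠ ∞ :=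
    (lintegral_prod_exponentialPDFReal_eq_one (inv_pos.2 hlam)).trans_ne ENNReal.one_ne_top
  rw [expMeasure_eq_expMeasure_inv, pi_expMeasure (inv_pos.2 hlam)]
  refine (tendsto_integral_withDensity_of_tendsto
    (fun n => (measurable_simplexMarginalDensity n (a n)).ennreal_ofReal)
    (measurable_prod_exponentialPDFReal lam⁻¹).ennreal_ofReal hexp_fin hmass
    (.of_forall fun x => ENNReal.tendsto_ofReal (tendsto_simplexMarginalDensity hlam hlim x))
    hf hC).congr' ?_
  filter_upwards [eventually_ge_atTop k, ha] with n hkn han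
  exact (integral_simplexMeasure_eq_integral_withDensity hkn han hf).symm

/-- Weak convergence of the first `k` marginals of the normalized Lebesgue measures on the
simplices `Σ_n(a_n)`, with `a_n / n → λ > 0`, to the `k`-fold product of exponential
distributions with mean `λ`. -/
theorem stmt0 (lam : ℝ) (hlam : 0 < lam) (a : ℕ → ℝ) (ha : ∀ n, 0 < a n)
    (hlim : Tendsto (fun n => a n / n) atTop (𝓝 lam)) (k : ℕ) (hk : 0 < k) :
    ∀ f : BoundedContinuousFunction (Fin k → ℝ) ℝ,
      Tendsto
        (fun n => ∫ y, f (fun i : Fin k => if h : (i : ℕ) < n then y ⟨i, h⟩ else 0)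
          ∂ simplexMeasure n (a n))
        atTop
        (𝓝 (∫ x, f x ∂ Measure.pi fun _ : Fin k => expMeasure lam)) := by
  exact fun f => stmt0_general hlam hlim f.continuous.aestronglyMeasurable f.norm_coe_le_norm
end

section
/- Let a > 0 and let n ≥ k ≥ 1 be integers. The pushforward of the normalized Lebesgue measure on the simplex Σ_n(a) = {y ∈ ℝ^n : y_i ≥ 0, Σ y_i ≤ a} under the projection y ↦ (y_1, …, y_k) is absolutely continuous with respect to Lebesgue measure on ℝ^k, with density at a point (y_1, …, y_k) with all y_i ≥ 0 and s := y_1 + … + y_k ≤ a equal to (1 − s/a)^{n−k} · n(n−1)⋯(n−k+1)/a^k, and density 0 elsewhere. -/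
/-!
For `x` in the simplex `Σ_k(a)` with coordinate sum `s`, the fibre of the projection
`Σ_n(a) → Σ_k(a)` over `x` is the simplex `Σ_{n-k}(a - s)`. By Fubini, the pushforward of Lebesgue
measure on `Σ_n(a)` therefore has density `x ↦ vol Σ_{n-k}(a - s) = (a - s)^(n-k) / (n-k)!`, and
dividing by `vol Σ_n(a) = a^n / n!` normalizes it. The same fibration over a single coordinate
computes these volumes by induction on the dimension.
-/

open MeasureTheory Filter Topology

/-- The simplex `Σ(a)` of nonnegative vectors with coordinate sum at most `a`. The coordinates are
indexed by an arbitrary finite type, so that coordinates can be split off along `ι ⊕ κ`; the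
simplex `Σ_n(a)` is the case `ι = Fin n`. -/
def cornerSimplex (ι : Type*) [Fintype ι] (a : ℝ) : Set (ι → ℝ) :=
  {y | (∀ i, 0 ≤ y i) ∧ ∑ i, y i ≤ a}

section Fibration

variable {ι κ : Type*} [Fintype ι] [Fintype κ] {a : ℝ}

theorem measurableSet_cornerSimplex (ι : Type*) [Fintype ι] (a : ℝ) :
    MeasurableSet (cornerSimplex ι a) :=
  (isClosed_Ici (a := (0 : ι → ℝ))).measurableSet.inter
    (measurableSet_le (f := fun y : ι → ℝ => ∑ i, y i) (by fun_prop) measurable_const)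

theorem preimage_comp_equiv_cornerSimplex (e : ι ≃ κ) (a : ℝ) :
    (fun y : κ → ℝ => y ∘ e) ⁻¹' cornerSimplex ι a = cornerSimplex κ a := by
  ext y
  simp only [cornerSimplex, Set.mem_preimage, Set.mem_ofPred_eq, Function.comp_apply,
    e.forall_congr_left, e.apply_symm_apply, e.sum_comp]

theorem sumElim_mem_cornerSimplex_iff {x : ι → ℝ} {y : κ → ℝ} :
    Sum.elim x y ∈ cornerSimplex (ι ⊕ κ) a ↔
      x ∈ cornerSimplex ι a ∧ y ∈ cornerSimplex κ (a - ∑ i, x i) := by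
  simp only [cornerSimplex, Set.mem_ofPred_eq, Sum.forall, Sum.elim_inl, Sum.elim_inr,
    Fintype.sum_sum_type]
  constructor
  · rintro ⟨⟨hx, hy⟩, hxy⟩
    have hy_sum : 0 ≤ ∑ i, y i := Finset.sum_nonneg fun i _ => hy i
    exact ⟨⟨hx, by linarith⟩, hy, by linarith⟩
  · rintro ⟨⟨hx, -⟩, hy, hxy⟩
    exact ⟨⟨hx, hy⟩, by linarith⟩

theorem measurePreserving_comp_equiv (e : ι ≃ κ) :
    MeasurePreserving (fun y : κ → ℝ => y ∘ e) :=
  volume_preserving_arrowCongr' e.symm (MeasurableEquiv.refl ℝ) (MeasurePreserving.id volume)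

theorem measurePreserving_sumElim (ι κ : Type*) [Fintype ι] [Fintype κ] :
    MeasurePreserving (fun p : (ι → ℝ) × (κ → ℝ) => Sum.elim p.1 p.2) := by
  have h_symm : (fun p : (ι → ℝ) × (κ → ℝ) => Sum.elim p.1 p.2) =
      (MeasurableEquiv.sumPiEquivProdPi fun _ : ι ⊕ κ => ℝ).symm := by
    ext p (i | i) <;> rfl
  rw [h_symm]
  exact volume_measurePreserving_sumPiEquivProdPi_symm _

theorem map_comp_equiv_restrict_cornerSimplex (e : ι ≃ κ) (a : ℝ) :
    (volume.restrict (cornerSimplex κ a)).map (fun y : κ → ℝ => y ∘ e) =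
      volume.restrict (cornerSimplex ι a) := by
  rw [← preimage_comp_equiv_cornerSimplex e]
  exact ((measurePreserving_comp_equiv e).restrict_preimage
    (measurableSet_cornerSimplex ι a)).map_eq

theorem volume_cornerSimplex_congr (e : ι ≃ κ) (a : ℝ) :
    volume (cornerSimplex ι a) = volume (cornerSimplex κ a) := by
  rw [← preimage_comp_equiv_cornerSimplex e, (measurePreserving_comp_equiv e).measure_preimage
    (measurableSet_cornerSimplex ι a).nullMeasurableSet]

theorem map_comp_inl_restrict_cornerSimplex (ι κ : Type*) [Fintype ι] [Fintype κ] (a : ℝ) :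
    (volume.restrict (cornerSimplex (ι ⊕ κ) a)).map (fun y => y ∘ Sum.inl) =
      (volume.restrict (cornerSimplex ι a)).withDensity
        fun x => volume (cornerSimplex κ (a - ∑ i, x i)) := by
  have h_meas : Measurable fun y : ι ⊕ κ → ℝ => y ∘ Sum.inl := by fun_prop
  ext s hs
  have h_set : MeasurableSet
      ((fun y : ι ⊕ κ → ℝ => y ∘ Sum.inl) ⁻¹' s ∩ cornerSimplex (ι ⊕ κ) a) :=
    (h_meas hs).inter (measurableSet_cornerSimplex _ a)
  rw [Measure.map_apply h_meas hs, Measure.restrict_apply (h_meas hs),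
    ← (measurePreserving_sumElim ι κ).measure_preimage h_set.nullMeasurableSet,
    Measure.volume_eq_prod, Measure.prod_apply ((measurePreserving_sumElim ι κ).measurable h_set),
    withDensity_apply _ hs, Measure.restrict_restrict hs,
    ← lintegral_indicator (hs.inter (measurableSet_cornerSimplex ι a))]
  refine lintegral_congr fun x => ?_
  by_cases hx : x ∈ s ∩ cornerSimplex ι a
  · rw [Set.indicator_of_mem hx]
    congr 1
    ext y
    simp [sumElim_mem_cornerSimplex_iff, hx.1, hx.2]
  · rw [Set.indicator_of_notMem hx, ← measure_empty (μ := (volume : Measure (κ → ℝ)))]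
    congr 1
    ext y
    simpa [sumElim_mem_cornerSimplex_iff] using fun hxs hxa => (hx ⟨hxs, hxa⟩).elim

theorem volume_cornerSimplex_sum (ι κ : Type*) [Fintype ι] [Fintype κ] (a : ℝ) :
    volume (cornerSimplex (ι ⊕ κ) a) =
      ∫⁻ x in cornerSimplex ι a, volume (cornerSimplex κ (a - ∑ i, x i)) := by
  simpa [Measure.map_apply (show Measurable fun y : ι ⊕ κ → ℝ => y ∘ Sum.inl by fun_prop)] using
    congrArg (fun μ => μ Set.univ) (map_comp_inl_restrict_cornerSimplex ι κ a)

end Fibration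

section Volume

theorem setLIntegral_cornerSimplex_of_unique (ι : Type*) [Fintype ι] [Unique ι] (a : ℝ)
    (f : ℝ → ENNReal) :
    ∫⁻ x in cornerSimplex ι a, f (∑ i, x i) = ∫⁻ t in Set.Icc 0 a, f t := by
  obtain rfl : ‹Fintype ι› = Unique.fintype := Subsingleton.elim _ _
  have h_preimage : MeasurableEquiv.funUnique ι ℝ ⁻¹' Set.Icc 0 a = cornerSimplex ι a := by
    ext x
    simp [cornerSimplex, Unique.forall_iff]
  rw [← (volume_preserving_funUnique ι ℝ).setLIntegral_comp_preimage_emb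
    (MeasurableEquiv.measurableEmbedding _), h_preimage]
  simp

theorem volume_cornerSimplex_option (ι : Type*) [Fintype ι] (a : ℝ) :
    volume (cornerSimplex (Option ι) a) =
      ∫⁻ t in Set.Icc 0 a, volume (cornerSimplex ι (a - t)) := by
  let e : Option ι ≃ Unit ⊕ ι := (Equiv.optionEquivSumPUnit ι).trans (Equiv.sumComm ι Unit)
  rw [volume_cornerSimplex_congr e, volume_cornerSimplex_sum,
    setLIntegral_cornerSimplex_of_unique Unit a fun t => volume (cornerSimplex ι (a - t))]

theorem integral_sub_pow_div_factorial (a : ℝ) (n : ℕ) :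
    ∫ t in (0 : ℝ)..a, (a - t) ^ n / (n.factorial : ℝ) =
      a ^ (n + 1) / ((n + 1).factorial : ℝ) := by
  rw [intervalIntegral.integral_div, intervalIntegral.integral_comp_sub_left (fun t => t ^ n) a,
    sub_self, sub_zero, integral_pow, zero_pow n.succ_ne_zero, sub_zero, div_div,
    Nat.factorial_succ]
  push_cast
  rfl

theorem setLIntegral_Icc_sub_pow_div_factorial {a : ℝ} (ha : 0 ≤ a) (n : ℕ) :
    ∫⁻ t in Set.Icc 0 a, ENNReal.ofReal ((a - t) ^ n / (n.factorial : ℝ)) =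
      ENNReal.ofReal (a ^ (n + 1) / ((n + 1).factorial : ℝ)) := by
  have h_int : IntegrableOn (fun t : ℝ => (a - t) ^ n / (n.factorial : ℝ)) (Set.Icc 0 a) :=
    Continuous.integrableOn_Icc (by fun_prop)
  have h_nonneg : 0 ≤ᵐ[volume.restrict (Set.Icc 0 a)]
      fun t : ℝ => (a - t) ^ n / (n.factorial : ℝ) := by
    filter_upwards [ae_restrict_mem measurableSet_Icc] with t ht
    exact div_nonneg (pow_nonneg (sub_nonneg.2 ht.2) n) (Nat.cast_nonneg _)
  rw [← ofReal_integral_eq_lintegral_ofReal h_int h_nonneg, integral_Icc_eq_integral_Ioc,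
    ← intervalIntegral.integral_of_le ha, integral_sub_pow_div_factorial]

theorem volume_cornerSimplex (ι : Type*) [Fintype ι] {a : ℝ} (ha : 0 ≤ a) :
    volume (cornerSimplex ι a) =
      ENNReal.ofReal (a ^ Fintype.card ι / ((Fintype.card ι).factorial : ℝ)) := by
  refine Fintype.induction_empty_option (P := fun ι _ => ∀ {a : ℝ}, 0 ≤ a →
    volume (cornerSimplex ι a) =
      ENNReal.ofReal (a ^ Fintype.card ι / ((Fintype.card ι).factorial : ℝ))) ?_ ?_ ?_ ι ha
  · intro ι κ _ e ih a ha
    let _ : Fintype ι := Fintype.ofEquiv κ e.symm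
    rw [← volume_cornerSimplex_congr e, ih ha, Fintype.card_congr e]
  · intro a ha
    rw [Set.eq_univ_of_forall (s := cornerSimplex _ a) fun y => ⟨fun i => i.elim, by simpa⟩]
    simp [volume_pi]
  · intro ι _ ih a ha
    calc volume (cornerSimplex (Option ι) a)
        = ∫⁻ t in Set.Icc 0 a, volume (cornerSimplex ι (a - t)) := volume_cornerSimplex_option ι a
      _ = ∫⁻ t in Set.Icc 0 a, ENNReal.ofReal
            ((a - t) ^ Fintype.card ι / ((Fintype.card ι).factorial : ℝ)) :=
          setLIntegral_congr_fun measurableSet_Icc fun t ht => ih (sub_nonneg.2 ht.2)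
      _ = _ := by
          rw [setLIntegral_Icc_sub_pow_div_factorial ha, Fintype.card_option]

end Volume

section Projection

variable {ι κ : Type*} [Fintype ι] [Fintype κ] {f : ι → κ}

theorem map_comp_restrict_cornerSimplex (hf : Function.Injective f) (a : ℝ) :
    (volume.restrict (cornerSimplex κ a)).map (fun y : κ → ℝ => y ∘ f) =
      (volume.restrict (cornerSimplex ι a)).withDensity fun x =>
        ENNReal.ofReal ((a - ∑ i, x i) ^ (Fintype.card κ - Fintype.card ι) /
          ((Fintype.card κ - Fintype.card ι).factorial : ℝ)) := by
  classical
  let e : ι ⊕ ↥(Set.range f)ᶜ ≃ κ :=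
    ((Equiv.ofInjective f hf).sumCongr (Equiv.refl _)).trans (Equiv.Set.sumCompl _)
  have h_card : Fintype.card ↥(Set.range f)ᶜ = Fintype.card κ - Fintype.card ι := by
    rw [← Fintype.card_congr e, Fintype.card_sum, Nat.add_sub_cancel_left]
  calc (volume.restrict (cornerSimplex κ a)).map (fun y : κ → ℝ => y ∘ f)
      = ((volume.restrict (cornerSimplex κ a)).map (fun y => y ∘ e)).map
          (fun y => y ∘ Sum.inl) :=
        (Measure.map_map (f := fun y : κ → ℝ => y ∘ e) (g := fun y => y ∘ Sum.inl)
          (by fun_prop) (by fun_prop)).symm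
    _ = (volume.restrict (cornerSimplex ι a)).withDensity
          fun x => volume (cornerSimplex ↥(Set.range f)ᶜ (a - ∑ i, x i)) := by
        rw [map_comp_equiv_restrict_cornerSimplex e, map_comp_inl_restrict_cornerSimplex]
    _ = _ := by
        refine withDensity_congr_ae ?_
        filter_upwards [ae_restrict_mem (measurableSet_cornerSimplex ι a)] with x hx
        rw [volume_cornerSimplex _ (sub_nonneg.2 hx.2), h_card]

theorem inv_pow_div_factorial_mul_sub_pow_div_factorial {a : ℝ} (ha : a ≠ 0) {n k : ℕ}
    (hkn : k ≤ n) (s : ℝ) :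
    (a ^ n / (n.factorial : ℝ))⁻¹ * ((a - s) ^ (n - k) / ((n - k).factorial : ℝ)) =
      (1 - s / a) ^ (n - k) * (n.descFactorial k : ℝ) / a ^ k := by
  have h_factorial : ((n - k).factorial : ℝ) * (n.descFactorial k : ℝ) = (n.factorial : ℝ) :=
    mod_cast Nat.factorial_mul_descFactorial hkn
  have h_pow : a ^ (n - k) * a ^ k = a ^ n := by rw [← pow_add, Nat.sub_add_cancel hkn]
  rw [← h_factorial, ← h_pow, one_sub_div ha, div_pow]
  field_simp

theorem stmt4_general (hf : Function.Injective f) {a : ℝ} (ha : 0 < a) :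
    (ProbabilityTheory.cond volume (cornerSimplex κ a)).map (fun y : κ → ℝ => y ∘ f) =
      volume.withDensity ((cornerSimplex ι a).indicator fun x => ENNReal.ofReal
        ((1 - (∑ i, x i) / a) ^ (Fintype.card κ - Fintype.card ι) *
          ((Fintype.card κ).descFactorial (Fintype.card ι) : ℝ) / a ^ Fintype.card ι)) := by
  have h_pos : 0 < a ^ Fintype.card κ / ((Fintype.card κ).factorial : ℝ) := by positivity
  have h_vol_inv : (volume (cornerSimplex κ a))⁻¹ =
      ENNReal.ofReal (a ^ Fintype.card κ / ((Fintype.card κ).factorial : ℝ))⁻¹ := by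
    rw [volume_cornerSimplex κ ha.le, ENNReal.ofReal_inv_of_pos h_pos]
  rw [ProbabilityTheory.cond, Measure.map_smul, map_comp_restrict_cornerSimplex hf, h_vol_inv,
    ← withDensity_smul' _ _ ENNReal.ofReal_ne_top,
    withDensity_indicator (measurableSet_cornerSimplex ι a)]
  congr 1
  ext x
  rw [Pi.smul_apply, smul_eq_mul, ← ENNReal.ofReal_mul (inv_nonneg.2 h_pos.le),
    inv_pow_div_factorial_mul_sub_pow_div_factorial ha.ne' (Fintype.card_le_of_injective f hf)]

end Projection

/-- The pushforward of the normalized Lebesgue measure on `Σ_n(a)` under the projection to the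
first `k` coordinates has density `(1 - s/a)^(n-k) · n(n-1)⋯(n-k+1) / a^k` (with
`s = y_1 + … + y_k`) at points of `Σ_k(a)`, and density `0` elsewhere. -/
theorem stmt4 (a : ℝ) (ha : 0 < a) (n k : ℕ) (hk : 1 ≤ k) (hkn : k ≤ n) :
    Measure.map (fun y : Fin n → ℝ => fun i : Fin k => y (Fin.castLE hkn i))
        (simplexMeasure n a) =
      volume.withDensity (fun y : Fin k → ℝ =>
        if (∀ i, 0 ≤ y i) ∧ ∑ i, y i ≤ a then
          ENNReal.ofReal ((1 - (∑ i, y i) / a) ^ (n - k) * (n.descFactorial k : ℝ) / a ^ k)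
        else 0) := by
  convert! stmt4_general (Fin.castLE_injective hkn) ha using 3 with y
  simp [Set.indicator_apply, cornerSimplex]
end
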